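/- Let h ⊆ BD(G) ⊕ BD(G) be maximal monotone and selfadjoint, with Arens decomposition h = S ⊕ ({0} × U^⊥), U := closure of [BD(G)]h, and let R be a nonnegative selfadjoint square root of S (R ∘ R = S). Set E₀ := {u ∈ D(G) : π_{BD(G)}u ∈ D(R)}, L : E₀ → H, u ↦ Gu, K : E₀ → U, u ↦ Rπ_{BD(G)}u. Then {(u,w) ∈ D(G) × D(D) : (π_{BD(G)}u, Ḋπ_{BD(D)}w) ∈ h} = {(u,w) ∈ E₀ × H : K^⋄Ku − L^⋄w ∈ E}, where 'K^⋄Ku − L^⋄w ∈ E' means there exists e ∈ E with ⟨e,x⟩_E = ⟨Ku,Kx⟩_U − ⟨w,Lx⟩_H for all x ∈ E₀. -/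

import Mathlib

open scoped ComplexInnerProductSpace
open Filter Topology Classical

noncomputable section

variable {E H : Type*}
  [NormedAddCommGroup E] [InnerProductSpace ℂ E] [CompleteSpace E]
  [NormedAddCommGroup H] [InnerProductSpace ℂ H] [CompleteSpace H]

/-- The operator `G := (−D₀)*`. -/
def Gop (D₀ : H →ₗ.[ℂ] E) : E →ₗ.[ℂ] H := (-D₀).adjoint

/-- The operator `D := −(G₀)*`. -/
def Dop (G₀ : E →ₗ.[ℂ] H) : H →ₗ.[ℂ] E := -(G₀.adjoint)

/-- Pointwise application of `G`, defined to be `0` off the domain. -/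
def Gap (D₀ : H →ₗ.[ℂ] E) (u : E) : H :=
  if h : u ∈ (Gop D₀).domain then Gop D₀ ⟨u, h⟩ else 0

/-- Pointwise application of `D`, defined to be `0` off the domain. -/
def Dap (G₀ : E →ₗ.[ℂ] H) (w : H) : E :=
  if h : w ∈ (Dop G₀).domain then Dop G₀ ⟨w, h⟩ else 0

/-- The graph inner product of `D_G`: `⟪x,y⟫_E + ⟪Gx,Gy⟫_H`. -/
def innG (D₀ : H →ₗ.[ℂ] E) (x y : E) : ℂ := ⟪x, y⟫ + ⟪Gap D₀ x, Gap D₀ y⟫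

/-- The graph inner product of `D_D`: `⟪x,y⟫_H + ⟪Dx,Dy⟫_E`. -/
def innD (G₀ : E →ₗ.[ℂ] H) (x y : H) : ℂ := ⟪x, y⟫ + ⟪Dap G₀ x, Dap G₀ y⟫

/-- The boundary data space `BD(G)`, the orthogonal complement of `D(G₀)` in `D_G`. -/
def BDG (G₀ : E →ₗ.[ℂ] H) (D₀ : H →ₗ.[ℂ] E) : Set E :=
  {u | u ∈ (Gop D₀).domain ∧ ∀ v ∈ G₀.domain, innG D₀ u v = 0}

/-- The boundary data space `BD(D)`, the orthogonal complement of `D(D₀)` in `D_D`. -/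
def BDD (G₀ : E →ₗ.[ℂ] H) (D₀ : H →ₗ.[ℂ] E) : Set H :=
  {w | w ∈ (Dop G₀).domain ∧ ∀ v ∈ D₀.domain, innD G₀ w v = 0}

/-- Monotonicity of a relation on `BD(G)` with respect to the graph inner product. -/
def IsMonotoneBDG (D₀ : H →ₗ.[ℂ] E) (h : Set (E × E)) : Prop :=
  ∀ p ∈ h, ∀ q ∈ h, 0 ≤ (innG D₀ (p.1 - q.1) (p.2 - q.2)).re

/-- Maximal monotonicity of a relation on the Hilbert space `BD(G)` (with the graph inner
product): `h` is monotone and has no proper monotone extension within `BD(G) ⊕ BD(G)`. -/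
def IsMaximalMonotoneBDG (G₀ : E →ₗ.[ℂ] H) (D₀ : H →ₗ.[ℂ] E) (h : Set (E × E)) : Prop :=
  h ⊆ (BDG G₀ D₀) ×ˢ (BDG G₀ D₀) ∧ IsMonotoneBDG D₀ h ∧
    ∀ b : Set (E × E), b ⊆ (BDG G₀ D₀) ×ˢ (BDG G₀ D₀) → IsMonotoneBDG D₀ b → h ⊆ b → b = h

/-- The adjoint relation of `h ⊆ BD(G) ⊕ BD(G)`, namely `h* = {(v,−u) : (u,v) ∈ h}^⊥` with
the orthogonal complement taken in `BD(G) ⊕ BD(G)`: a pair `(x,y) ∈ BD(G) ⊕ BD(G)` belongs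
to `h*` iff `⟪v,x⟫_{BD(G)} = ⟪u,y⟫_{BD(G)}` for all `(u,v) ∈ h`. -/
def adjBDG (G₀ : E →ₗ.[ℂ] H) (D₀ : H →ₗ.[ℂ] E) (h : Set (E × E)) : Set (E × E) :=
  {q | q.1 ∈ BDG G₀ D₀ ∧ q.2 ∈ BDG G₀ D₀ ∧
    ∀ p ∈ h, innG D₀ p.2 q.1 = innG D₀ p.1 q.2}

/-- The pre-set `[BD(G)]h = {u : ∃ v, (u,v) ∈ h}` of a relation `h` on `BD(G)`. -/
def preSetE (h : Set (E × E)) : Set E := {u | ∃ v, (u, v) ∈ h}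

/-- The closure of a set `s ⊆ D(G)` inside the Hilbert space `D_G` (with the graph norm),
in sequential form. -/
def clG (D₀ : H →ₗ.[ℂ] E) (s : Set E) : Set E :=
  {u | u ∈ (Gop D₀).domain ∧ ∃ f : ℕ → E, (∀ n, f n ∈ s) ∧
    Tendsto f atTop (nhds u) ∧ Tendsto (fun n => Gap D₀ (f n)) atTop (nhds (Gap D₀ u))}

section aux

theorem gap_spec (D₀ : H →ₗ.[ℂ] E) (hd : Dense (D₀.domain : Set H)) {u : E}
    (hu : u ∈ (Gop D₀).domain) (v : D₀.domain) :
    (⟪Gap D₀ u, (v : H)⟫ : ℂ) = -⟪u, D₀ v⟫ := by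
  have hd' : Dense ((-D₀).domain : Set H) := hd
  have := LinearPMap.adjoint_isFormalAdjoint hd' ⟨u, hu⟩ v
  unfold Gap
  rw [dif_pos hu]
  refine this.trans ?_
  rw [LinearPMap.neg_apply, inner_neg_right]

theorem gap_of (D₀ : H →ₗ.[ℂ] E) (hd : Dense (D₀.domain : Set H)) {u : E} {g : H}
    (hg : ∀ v : D₀.domain, (⟪g, (v : H)⟫ : ℂ) = -⟪u, D₀ v⟫) :
    u ∈ (Gop D₀).domain ∧ Gap D₀ u = g := by
  have hd' : Dense ((-D₀).domain : Set H) := hd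
  have hg' : ∀ v : (-D₀).domain, (⟪g, (v : H)⟫ : ℂ) = ⟪u, (-D₀) v⟫ := by
    intro v
    rw [LinearPMap.neg_apply, inner_neg_right]
    exact hg v
  have hu : u ∈ (Gop D₀).domain := LinearPMap.mem_adjoint_domain_of_exists u ⟨g, hg'⟩
  refine ⟨hu, ?_⟩
  unfold Gap
  rw [dif_pos hu]
  exact LinearPMap.adjoint_apply_eq hd' ⟨u, hu⟩ hg'

theorem dap_spec (G₀ : E →ₗ.[ℂ] H) (hd : Dense (G₀.domain : Set E)) {w : H}
    (hw : w ∈ (Dop G₀).domain) (v : G₀.domain) :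
    (⟪Dap G₀ w, (v : E)⟫ : ℂ) = -⟪w, G₀ v⟫ := by
  have := LinearPMap.adjoint_isFormalAdjoint hd ⟨w, hw⟩ v
  unfold Dap
  rw [dif_pos hw, ← this]
  unfold Dop
  rw [LinearPMap.neg_apply, inner_neg_left]

theorem dap_of (G₀ : E →ₗ.[ℂ] H) (hd : Dense (G₀.domain : Set E)) {w : H} {g : E}
    (hg : ∀ v : G₀.domain, (⟪g, (v : E)⟫ : ℂ) = -⟪w, G₀ v⟫) :
    w ∈ (Dop G₀).domain ∧ Dap G₀ w = g := by
  have hg' : ∀ v : G₀.domain, (⟪-g, (v : E)⟫ : ℂ) = ⟪w, G₀ v⟫ := by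
    intro v
    rw [inner_neg_left, hg v, neg_neg]
  have hw : w ∈ (Dop G₀).domain := LinearPMap.mem_adjoint_domain_of_exists w ⟨-g, hg'⟩
  refine ⟨hw, ?_⟩
  unfold Dap
  rw [dif_pos hw]
  have := LinearPMap.adjoint_apply_eq hd ⟨w, hw⟩ hg'
  unfold Dop
  rw [LinearPMap.neg_apply]
  rw [this, neg_neg]

theorem gap_add (D₀ : H →ₗ.[ℂ] E) {u v : E}
    (hu : u ∈ (Gop D₀).domain) (hv : v ∈ (Gop D₀).domain) :
    Gap D₀ (u + v) = Gap D₀ u + Gap D₀ v := by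
  unfold Gap
  rw [dif_pos hu, dif_pos hv, dif_pos (Submodule.add_mem _ hu hv), ← LinearPMap.map_add]
  rfl

theorem gap_zero (D₀ : H →ₗ.[ℂ] E) : Gap D₀ 0 = 0 := by
  unfold Gap
  rw [dif_pos (Submodule.zero_mem _)]
  exact LinearPMap.map_zero _

theorem dap_add (G₀ : E →ₗ.[ℂ] H) {u v : H}
    (hu : u ∈ (Dop G₀).domain) (hv : v ∈ (Dop G₀).domain) :
    Dap G₀ (u + v) = Dap G₀ u + Dap G₀ v := by
  unfold Dap
  rw [dif_pos hu, dif_pos hv, dif_pos (Submodule.add_mem _ hu hv), ← LinearPMap.map_add]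
  rfl

theorem gap_ext (G₀ : E →ₗ.[ℂ] H) (D₀ : H →ₗ.[ℂ] E) (hsub : G₀ ≤ Gop D₀) (v : G₀.domain) :
    (v : E) ∈ (Gop D₀).domain ∧ Gap D₀ v = G₀ v := by
  have hv := hsub.1 v.2
  refine ⟨hv, ?_⟩
  unfold Gap
  rw [dif_pos hv]
  exact (hsub.2 (x := v) (y := ⟨v, hv⟩) rfl).symm

theorem dap_ext (G₀ : E →ₗ.[ℂ] H) (D₀ : H →ₗ.[ℂ] E)
    (hG : Dense (G₀.domain : Set E)) (hD : Dense (D₀.domain : Set H))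
    (hsub : G₀ ≤ Gop D₀) (v : D₀.domain) :
    (v : H) ∈ (Dop G₀).domain ∧ Dap G₀ v = D₀ v := by
  apply dap_of G₀ hG
  intro x
  obtain ⟨hx, hx2⟩ := gap_ext G₀ D₀ hsub x
  have := gap_spec D₀ hD hx v
  rw [hx2] at this
  rw [← inner_conj_symm (v : H) (G₀ x), this, map_neg, neg_neg, inner_conj_symm]

theorem innG_conj (D₀ : H →ₗ.[ℂ] E) (x y : E) :
    (starRingEnd ℂ) (innG D₀ x y) = innG D₀ y x := by
  unfold innG
  rw [map_add, inner_conj_symm, inner_conj_symm]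

theorem innG_add_left (D₀ : H →ₗ.[ℂ] E) {x y : E} (z : E)
    (hx : x ∈ (Gop D₀).domain) (hy : y ∈ (Gop D₀).domain) :
    innG D₀ (x + y) z = innG D₀ x z + innG D₀ y z := by
  unfold innG
  rw [gap_add D₀ hx hy, inner_add_left, inner_add_left]
  ring

theorem innG_zero_left (D₀ : H →ₗ.[ℂ] E) (x : E) : innG D₀ 0 x = 0 := by
  simp [innG, gap_zero]

theorem innG_zero_right (D₀ : H →ₗ.[ℂ] E) (x : E) : innG D₀ x 0 = 0 := by
  simp [innG, gap_zero]

theorem innG_self (D₀ : H →ₗ.[ℂ] E) {x : E} (hx : innG D₀ x x = 0) : x = 0 := by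
  unfold innG at hx
  have h1 := congrArg Complex.re hx
  rw [inner_self_eq_norm_sq_to_K, inner_self_eq_norm_sq_to_K] at h1
  norm_cast at h1
  have : ‖x‖ ^ 2 + ‖Gap D₀ x‖ ^ 2 = 0 := by exact_mod_cast h1
  have : ‖x‖ = 0 := by nlinarith [sq_nonneg ‖x‖, sq_nonneg ‖Gap D₀ x‖]
  exact norm_eq_zero.mp this

theorem zero_mem_BDG (G₀ : E →ₗ.[ℂ] H) (D₀ : H →ₗ.[ℂ] E) : (0 : E) ∈ BDG G₀ D₀ :=
  ⟨Submodule.zero_mem _, fun v _ => innG_zero_left D₀ v⟩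

theorem BDG_inter (G₀ : E →ₗ.[ℂ] H) (D₀ : H →ₗ.[ℂ] E) {x : E}
    (hx : x ∈ BDG G₀ D₀) (hx' : x ∈ G₀.domain) : x = 0 :=
  innG_self D₀ (hx.2 x hx')

theorem BDG_sub (G₀ : E →ₗ.[ℂ] H) (D₀ : H →ₗ.[ℂ] E) {x y : E}
    (hx : x ∈ BDG G₀ D₀) (hy : y ∈ BDG G₀ D₀) : x - y ∈ BDG G₀ D₀ := by
  have hs : x - y ∈ (Gop D₀).domain := Submodule.sub_mem _ hx.1 hy.1
  refine ⟨hs, fun v hv => ?_⟩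
  have := innG_add_left D₀ v hs hy.1
  rw [sub_add_cancel, hx.2 v hv, hy.2 v hv, add_zero] at this
  exact this.symm

theorem clG_sub (G₀ : E →ₗ.[ℂ] H) (D₀ : H →ₗ.[ℂ] E) {s : Set E} (hs : s ⊆ BDG G₀ D₀) :
    clG D₀ s ⊆ BDG G₀ D₀ := by
  rintro u ⟨hu, f, hf, h1, h2⟩
  refine ⟨hu, fun v hv => ?_⟩
  have ht : Tendsto (fun n => innG D₀ (f n) v) atTop (nhds (innG D₀ u v)) := by
    unfold innG
    exact (h1.inner tendsto_const_nhds).add (h2.inner tendsto_const_nhds)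
  have : (fun n => innG D₀ (f n) v) = fun _ => 0 := funext fun n => (hs (hf n)).2 v hv
  rw [this] at ht
  exact tendsto_nhds_unique ht tendsto_const_nhds

theorem dap_BDD (G₀ : E →ₗ.[ℂ] H) (D₀ : H →ₗ.[ℂ] E)
    (hG : Dense (G₀.domain : Set E)) (hD : Dense (D₀.domain : Set H))
    (hsub : G₀ ≤ Gop D₀) {w : H} (hw : w ∈ BDD G₀ D₀) :
    Dap G₀ w ∈ BDG G₀ D₀ ∧ Gap D₀ (Dap G₀ w) = w := by
  have key : Dap G₀ w ∈ (Gop D₀).domain ∧ Gap D₀ (Dap G₀ w) = w := by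
    apply gap_of D₀ hD
    intro v
    have := hw.2 v v.2
    unfold innD at this
    rw [(dap_ext G₀ D₀ hG hD hsub v).2] at this
    exact eq_neg_of_add_eq_zero_left this
  refine ⟨⟨key.1, fun v hv => ?_⟩, key.2⟩
  unfold innG
  rw [key.2, (gap_ext G₀ D₀ hsub ⟨v, hv⟩).2]
  rw [dap_spec G₀ hG hw.1 ⟨v, hv⟩]
  ring

/-- Green's formula. -/
theorem green (G₀ : E →ₗ.[ℂ] H) (D₀ : H →ₗ.[ℂ] E)
    (hG : Dense (G₀.domain : Set E)) (hD : Dense (D₀.domain : Set H))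
    (hsub : G₀ ≤ Gop D₀) {u ub : E} {w wb : H}
    (hu : u ∈ (Gop D₀).domain) (hw : w ∈ (Dop G₀).domain)
    (hub : ub ∈ BDG G₀ D₀) (hwb : wb ∈ BDD G₀ D₀)
    (hu0 : u - ub ∈ G₀.domain) (hw0 : w - wb ∈ D₀.domain) :
    (⟪Dap G₀ w, u⟫ : ℂ) + ⟪w, Gap D₀ u⟫ = innG D₀ (Dap G₀ wb) ub := by
  obtain ⟨hwd, hwe⟩ := dap_ext G₀ D₀ hG hD hsub ⟨_, hw0⟩
  obtain ⟨hud, hue⟩ := gap_ext G₀ D₀ hsub ⟨_, hu0⟩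
  have e1 : Dap G₀ w = Dap G₀ (w - wb) + Dap G₀ wb := by
    rw [← dap_add G₀ hwd hwb.1, sub_add_cancel]
  have e2 : Gap D₀ u = Gap D₀ (u - ub) + Gap D₀ ub := by
    rw [← gap_add D₀ hud hub.1, sub_add_cancel]
  have a1 : (⟪Dap G₀ (w - wb), u⟫ : ℂ) = - ⟪w - wb, Gap D₀ u⟫ := by
    have := gap_spec D₀ hD hu ⟨_, hw0⟩
    rw [← inner_conj_symm (w - wb) (Gap D₀ u)]
    erw [this, hwe]
    rw [map_neg, neg_neg, inner_conj_symm]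
  have a2 : (⟪Dap G₀ wb, u - ub⟫ : ℂ) = - ⟪wb, Gap D₀ (u - ub)⟫ := by
    have := dap_spec G₀ hG hwb.1 ⟨_, hu0⟩
    rw [← hue] at this
    exact this
  have b1 : (⟪w, Gap D₀ u⟫ : ℂ) = ⟪w - wb, Gap D₀ u⟫ + ⟪wb, Gap D₀ u⟫ := by
    rw [← inner_add_left, sub_add_cancel]
  have b2 : (⟪Dap G₀ wb, u⟫ : ℂ) = ⟪Dap G₀ wb, u - ub⟫ + ⟪Dap G₀ wb, ub⟫ := by
    rw [← inner_add_right, sub_add_cancel]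
  have b3 : (⟪wb, Gap D₀ u⟫ : ℂ) = ⟪wb, Gap D₀ (u - ub)⟫ + ⟪wb, Gap D₀ ub⟫ := by
    rw [← inner_add_right, ← e2]
  unfold innG
  rw [(dap_BDD G₀ D₀ hG hD hsub hwb).2, e1, inner_add_left, a1, b1, b2, a2, b3]
  ring

end aux

/-- [Trostorff 2015, Lemma 3.9]: with `E₀ := {u ∈ D(G) : π_{BD(G)}u ∈ D(R)}`, `L = G` on
`E₀` and `K = Rπ_{BD(G)}` built from the square root `R = √S` of the Arens decomposition of
the maximal monotone selfadjoint relation `h`, one has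
`{(u,w) ∈ D(G) × D(D) : (π_{BD(G)}u, Ḋπ_{BD(D)}w) ∈ h}
  = {(u,w) ∈ E₀ × H : K^⋄Ku − L^⋄w ∈ E}`,
where `K^⋄Ku − L^⋄w ∈ E` means that there is an `e ∈ E` with
`⟪e,x⟫_E = ⟪Ku,Kx⟫_U − ⟪w,Lx⟫_H` for all `x ∈ E₀` (the inner product of `U ⊆ BD(G)` being
the graph inner product). -/
theorem domA_eq_of_sqrt (G₀ : E →ₗ.[ℂ] H) (D₀ : H →ₗ.[ℂ] E)
    (hG₀dense : Dense (G₀.domain : Set E)) (hD₀dense : Dense (D₀.domain : Set H))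
    (hG₀closed : G₀.IsClosed) (hD₀closed : D₀.IsClosed)
    (hsub : G₀ ≤ Gop D₀)
    -- the orthogonal projections onto the boundary data spaces
    (PG : E → E) (PD : H → H)
    (hPG : ∀ u ∈ (Gop D₀).domain, PG u ∈ BDG G₀ D₀ ∧ u - PG u ∈ G₀.domain)
    (hPD : ∀ w ∈ (Dop G₀).domain, PD w ∈ BDD G₀ D₀ ∧ w - PD w ∈ D₀.domain)
    -- `h` is maximal monotone and selfadjoint
    (h : Set (E × E))
    (hmax : IsMaximalMonotoneBDG G₀ D₀ h)
    (hself : h = adjBDG G₀ D₀ h)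
    -- the Arens decomposition `h = S ⊕ ({0} × U^⊥)` with `U = clG D₀ (preSetE h)`
    (S : E → E)
    (hSmem : ∀ u ∈ preSetE h, S u ∈ clG D₀ (preSetE h))
    (hArens : h = {q : E × E | q.1 ∈ preSetE h ∧ ∃ n ∈ BDG G₀ D₀,
      (∀ y ∈ clG D₀ (preSetE h), innG D₀ y n = 0) ∧ q.2 = S q.1 + n})
    -- `R = √S`: a nonnegative selfadjoint operator on `U` with domain `DR` and `R ∘ R = S`
    (DR : Set E) (R : E → E)
    (hDR : DR ⊆ clG D₀ (preSetE h))
    (hRmem : ∀ u ∈ DR, R u ∈ clG D₀ (preSetE h))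
    (hRnonneg : ∀ u ∈ DR, 0 ≤ (innG D₀ u (R u)).re)
    (hRself : {p : E × E | p.1 ∈ DR ∧ p.2 = R p.1} =
      {p : E × E | p.1 ∈ clG D₀ (preSetE h) ∧ p.2 ∈ clG D₀ (preSetE h) ∧
        ∀ u ∈ DR, innG D₀ (R u) p.1 = innG D₀ u p.2})
    (hRR : (∀ u : E, (u ∈ DR ∧ R u ∈ DR) ↔ u ∈ preSetE h) ∧
      ∀ u ∈ preSetE h, R (R u) = S u) :
    {p : E × H | p.1 ∈ (Gop D₀).domain ∧ p.2 ∈ (Dop G₀).domain ∧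
        (PG p.1, Dap G₀ (PD p.2)) ∈ h} =
      {p : E × H | (p.1 ∈ (Gop D₀).domain ∧ PG p.1 ∈ DR) ∧
        ∃ e : E, ∀ x ∈ (Gop D₀).domain, PG x ∈ DR →
          (⟪e, x⟫ : ℂ) = innG D₀ (R (PG p.1)) (R (PG x)) - ⟪p.2, Gap D₀ x⟫} := by
  have hpre : preSetE h ⊆ BDG G₀ D₀ := by
    rintro u ⟨v, huv⟩
    exact (hmax.1 huv).1
  have hU : clG D₀ (preSetE h) ⊆ BDG G₀ D₀ := clG_sub G₀ D₀ hpre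
  have hsymm : ∀ a ∈ DR, ∀ b ∈ DR, innG D₀ (R a) b = innG D₀ a (R b) := by
    intro a ha b hb
    have hm : ((b, R b) : E × E) ∈ {p : E × E | p.1 ∈ DR ∧ p.2 = R p.1} := ⟨hb, rfl⟩
    rw [hRself] at hm
    exact hm.2.2 a ha
  have h0h : ((0, 0) : E × E) ∈ h := by
    rw [hself]
    exact ⟨zero_mem_BDG G₀ D₀, zero_mem_BDG G₀ D₀, fun p _ => by
      rw [innG_zero_right, innG_zero_right]⟩
  have h0U : (0 : E) ∈ clG D₀ (preSetE h) :=
    ⟨Submodule.zero_mem _, fun _ => 0, fun _ => ⟨0, h0h⟩, tendsto_const_nhds, tendsto_const_nhds⟩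
  have h0R : (0 : E) ∈ DR ∧ (0 : E) = R 0 := by
    have hm : ((0, 0) : E × E) ∈ {p : E × E | p.1 ∈ DR ∧ p.2 = R p.1} := by
      rw [hRself]
      exact ⟨h0U, h0U, fun u _ => by rw [innG_zero_right, innG_zero_right]⟩
    exact hm
  -- pairing of elements of `h` with elements of `DR`
  have hpair : ∀ a b : E, (a, b) ∈ h → ∀ y ∈ DR,
      a ∈ DR ∧ innG D₀ b y = innG D₀ (R a) (R y) := by
    intro a b hab y hy
    rw [hArens] at hab
    obtain ⟨ha, n, hn, hnU, hb⟩ := hab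
    obtain ⟨haR, hRaR⟩ := (hRR.1 a).2 ha
    refine ⟨haR, ?_⟩
    have hb' : b = S a + n := hb
    rw [hb', innG_add_left D₀ y (hSmem a ha).1 hn.1, ← innG_conj D₀ y n, hnU y (hDR hy),
      map_zero, add_zero, ← hRR.2 a ha]
    exact hsymm _ hRaR y hy
  ext ⟨u, w⟩
  constructor
  · rintro ⟨hu, hw, huw⟩
    dsimp only at hu hw huw
    have huR : PG u ∈ DR := (hpair _ _ huw 0 h0R.1).1
    refine ⟨⟨hu, huR⟩, Dap G₀ w, fun x hx hxR => ?_⟩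
    have hg := green G₀ D₀ hG₀dense hD₀dense hsub hx hw (hPG x hx).1 (hPD w hw).1
      (hPG x hx).2 (hPD w hw).2
    rw [(hpair _ _ huw _ hxR).2] at hg
    exact eq_sub_of_add_eq hg
  · rintro ⟨⟨hu, huR⟩, e, he⟩
    dsimp only at hu huR he
    have hwe : w ∈ (Dop G₀).domain ∧ Dap G₀ w = e := by
      apply dap_of G₀ hG₀dense
      intro v
      obtain ⟨hv, hve⟩ := gap_ext G₀ D₀ hsub v
      have hP0 : PG v = 0 := by
        refine BDG_inter G₀ D₀ (hPG v hv).1 ?_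
        have := Submodule.sub_mem _ v.2 (hPG v hv).2
        rwa [sub_sub_cancel] at this
      have := he v hv (by rw [hP0]; exact h0R.1)
      rw [this, hP0, ← h0R.2, innG_zero_right, hve, zero_sub]
    obtain ⟨hw, hwe⟩ := hwe
    have hz := dap_BDD G₀ D₀ hG₀dense hD₀dense hsub (hPD w hw).1
    refine ⟨hu, hw, ?_⟩
    show (PG u, Dap G₀ (PD w)) ∈ h
    rw [hself]
    refine ⟨(hPG u hu).1, hz.1, ?_⟩
    rintro ⟨a, b⟩ hab
    show innG D₀ b (PG u) = innG D₀ a (Dap G₀ (PD w))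
    obtain ⟨haR, hb⟩ := hpair a b hab _ huR
    have haB : a ∈ BDG G₀ D₀ := hU (hDR haR)
    have hPa : PG a = a := by
      have := BDG_inter G₀ D₀ (BDG_sub G₀ D₀ haB (hPG a haB.1).1) (hPG a haB.1).2
      exact (sub_eq_zero.mp this).symm
    have hg := green G₀ D₀ hG₀dense hD₀dense hsub haB.1 hw (hPG a haB.1).1 (hPD w hw).1
      (hPG a haB.1).2 (hPD w hw).2
    have hea := he a haB.1 (by rw [hPa]; exact haR)
    rw [hwe, hea, hPa, sub_add_cancel] at hg
    rw [hb, ← innG_conj, hg, innG_conj]
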